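/- arXiv:0711.1536 — 2 statements merged into one kernel-verified Lean document; each statement's English description precedes it below -/
import Mathlib

section
/- Let V be a finite-dimensional vector space over 𝔽₂ and let Q, Q' : V → 𝔽₂ be quadratic forms (i.e. Q(a·x) = a²Q(x) and the polar form B(x,y) = Q(x+y) + Q(x) + Q(y) is bilinear). Then Q and Q' are equivalent (there exists a linear automorphism φ of V with Q' = Q ∘ φ) if and only if the bilinear radicals bilrad(V,B) = {x ∈ V | B(x,y) = 0 for all y} and bilrad(V,B') have the same dimension and the sets {x ∈ V | Q(x) = 0} and {x ∈ V | Q'(x) = 0} have the same cardinality. (Browder's classification, Theorem 5.1: a quadratic form over 𝔽₂ is determined up to equivalence by (dim V, dim bilrad, Arf), where the Arf invariant is Browder's democratic invariant recording whether the majority of elements map to 0, to 1, or equally many to each.) -/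
namespace QF2

lemma zmod2_cases (a : ZMod 2) : a = 0 ∨ a = 1 := by
  revert a; decide

lemma zmod2_eq_of_iff {a b : ZMod 2} (h : a = 0 ↔ b = 0) : a = b := by
  revert a b; decide

/-- Two subspaces with equal dimensions are exchanged by an isomorphism. -/
lemma exists_equiv_of_card {V V' : Type*} [AddCommGroup V] [Module (ZMod 2) V]
    [FiniteDimensional (ZMod 2) V] [AddCommGroup V'] [Module (ZMod 2) V']
    [FiniteDimensional (ZMod 2) V'] (Z : Submodule (ZMod 2) V) (Z' : Submodule (ZMod 2) V')
    (hV : Module.finrank (ZMod 2) V = Module.finrank (ZMod 2) V')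
    (hZ : Module.finrank (ZMod 2) Z = Module.finrank (ZMod 2) Z') :
    ∃ φ : V ≃ₗ[ZMod 2] V', ∀ x, φ x ∈ Z' ↔ x ∈ Z := by
  obtain ⟨C, hC⟩ := Z.exists_isCompl
  obtain ⟨C', hC'⟩ := Z'.exists_isCompl
  have h1 := Submodule.finrank_add_eq_of_isCompl hC
  have h2 := Submodule.finrank_add_eq_of_isCompl hC'
  have hCC : Module.finrank (ZMod 2) C = Module.finrank (ZMod 2) C' := by omega
  let α : Z ≃ₗ[ZMod 2] Z' := LinearEquiv.ofFinrankEq _ _ hZ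
  let β : C ≃ₗ[ZMod 2] C' := LinearEquiv.ofFinrankEq _ _ hCC
  let ψ := Submodule.prodEquivOfIsCompl Z C hC
  let ψ' := Submodule.prodEquivOfIsCompl Z' C' hC'
  refine ⟨ψ.symm.trans ((LinearEquiv.prodCongr α β).trans ψ'), fun x => ?_⟩
  obtain ⟨⟨z, c⟩, rfl⟩ := ψ.surjective x
  have e1 : (ψ.symm.trans ((LinearEquiv.prodCongr α β).trans ψ')) (ψ (z, c)) = α z + β c := by
    simp [ψ']
  have e2 : ψ (z, c) = z + c := by simp [ψ]
  rw [e1, e2, Submodule.add_mem_iff_right _ (α z).2, Submodule.add_mem_iff_right _ z.2]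
  constructor
  · intro h
    have : (β c : V') = 0 := Submodule.disjoint_def.1 hC'.disjoint _ h (β c).2
    have : c = 0 := by simpa using this
    simp [this]
  · intro h
    have : (c : V) = 0 := Submodule.disjoint_def.1 hC.disjoint _ h c.2
    have : c = 0 := by simpa using this
    simp [this]

lemma finrank_eq_of_natCard {V V' : Type*} [AddCommGroup V] [Module (ZMod 2) V]
    [FiniteDimensional (ZMod 2) V] [AddCommGroup V'] [Module (ZMod 2) V']
    [FiniteDimensional (ZMod 2) V'] (h : Nat.card V = Nat.card V') :
    Module.finrank (ZMod 2) V = Module.finrank (ZMod 2) V' := by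
  rw [Module.natCard_eq_pow_finrank (K := ZMod 2), Module.natCard_eq_pow_finrank (K := ZMod 2) (V := V')] at h
  simp only [Nat.card_zmod] at h
  exact Nat.pow_right_injective (le_refl 2) h

lemma natCard_eq_of_finrank {V V' : Type*} [AddCommGroup V] [Module (ZMod 2) V]
    [FiniteDimensional (ZMod 2) V] [AddCommGroup V'] [Module (ZMod 2) V']
    [FiniteDimensional (ZMod 2) V']
    (h : Module.finrank (ZMod 2) V = Module.finrank (ZMod 2) V') : Nat.card V = Nat.card V' := by
  rw [Module.natCard_eq_pow_finrank (K := ZMod 2),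
    Module.natCard_eq_pow_finrank (K := ZMod 2) (V := V')]
  simp only [Nat.card_zmod]
  rw [h]

/-- The radical. -/
abbrev rad {V : Type*} [AddCommGroup V] [Module (ZMod 2) V] (Q : QuadraticForm (ZMod 2) V) :
    Submodule (ZMod 2) V := LinearMap.ker Q.polarBilin

lemma mem_rad {V : Type*} [AddCommGroup V] [Module (ZMod 2) V] (Q : QuadraticForm (ZMod 2) V)
    (x : V) : x ∈ rad Q ↔ ∀ y, QuadraticMap.polar Q x y = 0 := by
  simp [rad, LinearMap.ext_iff]

lemma map_add' {V : Type*} [AddCommGroup V] [Module (ZMod 2) V] (Q : QuadraticForm (ZMod 2) V)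
    (x y : V) : Q (x + y) = Q x + Q y + QuadraticMap.polar Q x y := by
  simp [QuadraticMap.polar]

/-- No hyperbolic plane: the zero set is the radical, if the form is not purely radical. -/
lemma zero_iff_mem_rad {V : Type*} [AddCommGroup V] [Module (ZMod 2) V]
    (Q : QuadraticForm (ZMod 2) V) (h : ∀ x, Q x = 0 → x ∈ rad Q) (hr : rad Q ≠ ⊤) (x : V) :
    Q x = 0 ↔ x ∈ rad Q := by
  refine ⟨h x, fun hx => ?_⟩
  obtain ⟨e, -, he⟩ := SetLike.exists_of_lt (lt_top_iff_ne_top.2 hr)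
  rcases zmod2_cases (Q x) with h0 | h1
  · exact h0
  · exfalso
    have hQe : Q e = 1 := (zmod2_cases (Q e)).resolve_left fun h0 => he (h e h0)
    have : Q (x + e) = 0 := by
      rw [map_add', (mem_rad Q x).1 hx, h1, hQe]; decide
    exact he ((Submodule.add_mem_iff_right _ hx).1 (h _ this))

lemma exists_zero_submodule {V : Type*} [AddCommGroup V] [Module (ZMod 2) V]
    (Q : QuadraticForm (ZMod 2) V) (h : ∀ x, Q x = 0 → x ∈ rad Q) :
    ∃ Z : Submodule (ZMod 2) V, ∀ x, Q x = 0 ↔ x ∈ Z := by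
  by_cases hr : rad Q = ⊤
  · have hadd : ∀ x y, Q (x + y) = Q x + Q y := fun x y => by
      have hx : x ∈ rad Q := by rw [hr]; trivial
      rw [map_add', (mem_rad Q x).1 hx, add_zero]
    refine ⟨{ carrier := {x | Q x = 0}, zero_mem' := by simp, add_mem' := ?_, smul_mem' := ?_ },
      fun x => Iff.rfl⟩
    · intro a b ha hb
      simp only [Set.mem_ofPred_eq] at *
      rw [hadd, ha, hb, add_zero]
    · intro c x hx
      simp only [Set.mem_ofPred_eq] at *
      rw [QuadraticMap.map_smul, hx, smul_zero]
  · exact ⟨rad Q, zero_iff_mem_rad Q h hr⟩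

/-- Splitting off a hyperbolic plane. -/
lemma split {V : Type*} [AddCommGroup V] [Module (ZMod 2) V]
    (Q : QuadraticForm (ZMod 2) V) (h : ∃ x, Q x = 0 ∧ x ∉ rad Q) :
    ∃ (W : Submodule (ZMod 2) V) (ψ : ((ZMod 2 × ZMod 2) × W) ≃ₗ[ZMod 2] V),
      (∀ p, Q (ψ p) = p.1.1 * p.1.2 + Q.comp W.subtype p.2) ∧
      rad Q = (rad (Q.comp W.subtype)).map W.subtype := by
  obtain ⟨e, hQe, he⟩ := h
  rw [mem_rad] at he
  push Not at he
  obtain ⟨f₀, hf₀⟩ := he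
  have hf₀ := (zmod2_cases _).resolve_left hf₀
  have hself : ∀ x, QuadraticMap.polar Q x x = 0 := fun x => by
    rw [QuadraticMap.polar_self]
    generalize Q x = a
    revert a; decide
  obtain ⟨f, hef, hQf⟩ : ∃ f, QuadraticMap.polar Q e f = 1 ∧ Q f = 0 := by
    rcases zmod2_cases (Q f₀) with h0 | h1
    · exact ⟨f₀, hf₀, h0⟩
    · refine ⟨e + f₀, ?_, ?_⟩
      · rw [QuadraticMap.polar_add_right, hself, hf₀, zero_add]
      · rw [map_add', hQe, h1, hf₀]; decide
  have hfe : QuadraticMap.polar Q f e = 1 := by rw [QuadraticMap.polar_comm, hef]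
  let W : Submodule (ZMod 2) V :=
    LinearMap.ker (Q.polarBilin e) ⊓ LinearMap.ker (Q.polarBilin f)
  have hW : ∀ x, x ∈ W ↔ QuadraticMap.polar Q e x = 0 ∧ QuadraticMap.polar Q f x = 0 :=
    fun x => by simp [W]
  have h11 : (1 : ZMod 2) + 1 = 0 := by decide
  have hneg : ∀ a : ZMod 2, -a = a := by decide
  let L : ((ZMod 2 × ZMod 2) × W) →ₗ[ZMod 2] V :=
    LinearMap.coprod (LinearMap.coprod (LinearMap.toSpanSingleton (ZMod 2) V e)
      (LinearMap.toSpanSingleton (ZMod 2) V f)) W.subtype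
  have hL : ∀ p, L p = p.1.1 • e + p.1.2 • f + (p.2 : V) := fun p => by simp [L]
  have hpe : ∀ p, QuadraticMap.polar Q e (L p) = p.1.2 := fun p => by
    rw [hL, QuadraticMap.polar_add_right, QuadraticMap.polar_add_right,
      QuadraticMap.polar_smul_right, QuadraticMap.polar_smul_right, hself, hef,
      ((hW _).1 p.2.2).1]
    simp
  have hpf : ∀ p, QuadraticMap.polar Q f (L p) = p.1.1 := fun p => by
    rw [hL, QuadraticMap.polar_add_right, QuadraticMap.polar_add_right,
      QuadraticMap.polar_smul_right, QuadraticMap.polar_smul_right, hself, hfe,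
      ((hW _).1 p.2.2).2]
    simp
  have hinj : Function.Injective L := by
    intro p q hpq
    have h1 : p.1.1 = q.1.1 := by rw [← hpf, ← hpf, hpq]
    have h2 : p.1.2 = q.1.2 := by rw [← hpe, ← hpe, hpq]
    rw [hL, hL, h1, h2] at hpq
    have h3 : p.2 = q.2 := Subtype.ext (add_left_cancel hpq)
    exact Prod.ext (Prod.ext h1 h2) h3
  have hsurj : Function.Surjective L := by
    intro x
    have hw : x - QuadraticMap.polar Q f x • e - QuadraticMap.polar Q e x • f ∈ W := by
      rw [hW]
      simp only [QuadraticMap.polar_sub_right, QuadraticMap.polar_smul_right, hself, hef, hfe]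
      simp
    refine ⟨((QuadraticMap.polar Q f x, QuadraticMap.polar Q e x), ⟨_, hw⟩), ?_⟩
    rw [hL]
    simp
  have hbij : Function.Bijective L := ⟨hinj, hsurj⟩
  refine ⟨W, LinearEquiv.ofBijective L hbij, fun p => ?_, ?_⟩
  · rw [LinearEquiv.ofBijective_apply, hL, map_add', map_add', QuadraticMap.map_smul,
      QuadraticMap.map_smul, hQe, hQf, QuadraticMap.polar_add_left]
    simp only [QuadraticMap.polar_smul_left, QuadraticMap.polar_smul_right, hef,
      ((hW _).1 p.2.2).1, ((hW _).1 p.2.2).2]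
    simp [mul_comm]
  · have hcomp : ∀ a b : W, QuadraticMap.polar (Q.comp W.subtype) a b
        = QuadraticMap.polar Q a b := fun a b => by simp [QuadraticMap.polar]
    ext x
    rw [mem_rad, Submodule.mem_map]
    constructor
    · intro hx
      have hxW : x ∈ W := by
        rw [hW, QuadraticMap.polar_comm, hx, QuadraticMap.polar_comm, hx]; simp
      refine ⟨⟨x, hxW⟩, ?_, rfl⟩
      rw [mem_rad]
      intro y
      rw [hcomp]
      exact hx _
    · rintro ⟨w, hw, rfl⟩ y
      obtain ⟨p, rfl⟩ := hsurj y
      rw [mem_rad] at hw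
      have h1 := hw p.2
      rw [hcomp] at h1
      rw [hL, QuadraticMap.polar_add_right, QuadraticMap.polar_add_right,
        QuadraticMap.polar_smul_right, QuadraticMap.polar_smul_right, Submodule.subtype_apply, h1,
        QuadraticMap.polar_comm, ((hW _).1 w.2).1, QuadraticMap.polar_comm, ((hW _).1 w.2).2]
      simp

lemma count {V W : Type*} [Finite W] (q : V → ZMod 2) (r : W → ZMod 2)
    (ψ : ((ZMod 2 × ZMod 2) × W) ≃ V) (h : ∀ p, q (ψ p) = p.1.1 * p.1.2 + r p.2) :
    Nat.card {x | q x = 0} = Nat.card W + 2 * Nat.card {x | r x = 0} := by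
  classical
  have := Fintype.ofFinite W
  have e : Nat.card {x | q x = 0} =
      Nat.card {p : (ZMod 2 × ZMod 2) × W // p.1.1 * p.1.2 + r p.2 = 0} :=
    (Nat.card_congr (ψ.subtypeEquiv fun p => by simp [h])).symm
  have hc : Fintype.card W = (∑ w : W, if r w = 0 then 1 else 0)
      + ∑ w : W, if 1 + r w = 0 then 1 else 0 := by
    rw [← Finset.sum_add_distrib, ← Finset.card_univ, Finset.card_eq_sum_ones]
    refine Finset.sum_congr rfl fun w _ => ?_
    generalize r w = a
    revert a; decide
  have hz : Nat.card {x | r x = 0} = ∑ w : W, if r w = 0 then 1 else 0 := by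
    rw [Set.coe_ofPred, Nat.card_eq_fintype_card, Fintype.card_subtype, Finset.card_filter]
  have hu : (Finset.univ : Finset (ZMod 2)) = {0, 1} := by decide
  have h01 : (0 : ZMod 2) ≠ 1 := by decide
  rw [e, Nat.card_eq_fintype_card, Fintype.card_subtype, Finset.card_filter, hz,
    Nat.card_eq_fintype_card, hc, Fintype.sum_prod_type, Fintype.sum_prod_type]
  simp only [hu, Finset.sum_pair h01, mul_zero, mul_one, zero_add]
  ring

/-- If `Q` splits a plane, its number of zeros is larger than the radical. -/
lemma mixed {V V' : Type*} [AddCommGroup V] [Module (ZMod 2) V] [FiniteDimensional (ZMod 2) V]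
    [AddCommGroup V'] [Module (ZMod 2) V'] [FiniteDimensional (ZMod 2) V']
    (Q : QuadraticForm (ZMod 2) V) (Q' : QuadraticForm (ZMod 2) V')
    (hV : Nat.card V = Nat.card V') (hr : Nat.card (rad Q) = Nat.card (rad Q'))
    (hz : Nat.card {x | Q x = 0} = Nat.card {x | Q' x = 0})
    (h : ∃ x, Q x = 0 ∧ x ∉ rad Q) : ∃ x, Q' x = 0 ∧ x ∉ rad Q' := by
  by_contra hn
  push Not at hn
  obtain ⟨W, ψ, hψ, hrad⟩ := split Q h
  have := Module.finite_of_finite (ZMod 2) (M := V)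
  have := Module.finite_of_finite (ZMod 2) (M := V')
  have hc := count Q (Q.comp W.subtype) ψ.toEquiv hψ
  have hpos : 0 < Nat.card {x | Q.comp W.subtype x = 0} := by
    have : Nonempty {x | Q.comp W.subtype x = 0} := ⟨⟨0, by simp⟩⟩
    exact Nat.card_pos
  have hle : Nat.card (rad Q) ≤ Nat.card W := by
    refine Nat.card_mono (Set.toFinite (W : Set V)) ?_
    rw [hrad]
    exact Submodule.map_subtype_le _ _
  have hVW : Nat.card V = 4 * Nat.card W := by
    rw [← Nat.card_congr ψ.toEquiv]; simp [Nat.card_prod]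
  have hWpos : 0 < Nat.card W := Nat.card_pos
  have htop : rad Q' ≠ ⊤ := by
    intro ht
    rw [ht, Nat.card_congr (Submodule.topEquiv (R := ZMod 2) (M := V')).toEquiv] at hr
    omega
  have hz' : Nat.card {x | Q' x = 0} = Nat.card (rad Q') :=
    Nat.card_congr (Equiv.subtypeEquivRight (zero_iff_mem_rad Q' hn htop))
  omega

universe u

theorem classify (n : ℕ) : ∀ (V V' : Type u) [AddCommGroup V] [Module (ZMod 2) V]
    [FiniteDimensional (ZMod 2) V] [AddCommGroup V'] [Module (ZMod 2) V']
    [FiniteDimensional (ZMod 2) V']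
    (Q : QuadraticForm (ZMod 2) V) (Q' : QuadraticForm (ZMod 2) V'), Nat.card V = n →
    Nat.card V = Nat.card V' → Nat.card (rad Q) = Nat.card (rad Q') →
    Nat.card {x | Q x = 0} = Nat.card {x | Q' x = 0} →
    ∃ φ : V ≃ₗ[ZMod 2] V', ∀ x, Q' (φ x) = Q x := by
  induction n using Nat.strong_induction_on with
  | _ n ih =>
  intro V V' _ _ _ _ _ _ Q Q' hn hV hr hz
  have := Module.finite_of_finite (ZMod 2) (M := V)
  have := Module.finite_of_finite (ZMod 2) (M := V')
  by_cases h : ∃ x, Q x = 0 ∧ x ∉ rad Q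
  · have h' := mixed Q Q' hV hr hz h
    obtain ⟨W, ψ, hψ, hrad⟩ := split Q h
    obtain ⟨W', ψ', hψ', hrad'⟩ := split Q' h'
    have hc := count Q (Q.comp W.subtype) ψ.toEquiv hψ
    have hc' := count Q' (Q'.comp W'.subtype) ψ'.toEquiv hψ'
    have hVW : Nat.card V = 4 * Nat.card W := by
      rw [← Nat.card_congr ψ.toEquiv]; simp [Nat.card_prod]
    have hVW' : Nat.card V' = 4 * Nat.card W' := by
      rw [← Nat.card_congr ψ'.toEquiv]; simp [Nat.card_prod]
    have hWpos : 0 < Nat.card W := Nat.card_pos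
    have hR : Nat.card (rad Q) = Nat.card (rad (Q.comp W.subtype)) := by
      rw [hrad]
      exact (Nat.card_congr (Submodule.equivMapOfInjective _ W.subtype_injective _).toEquiv).symm
    have hR' : Nat.card (rad Q') = Nat.card (rad (Q'.comp W'.subtype)) := by
      rw [hrad']
      exact (Nat.card_congr (Submodule.equivMapOfInjective _ W'.subtype_injective _).toEquiv).symm
    obtain ⟨φ, hφ⟩ := ih (Nat.card W) (by omega) W W' (Q.comp W.subtype) (Q'.comp W'.subtype) rfl
      (by omega) (by omega) (by omega)
    refine ⟨ψ.symm.trans ((LinearEquiv.prodCongr (LinearEquiv.refl _ _) φ).trans ψ'), fun x => ?_⟩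
    obtain ⟨p, rfl⟩ := ψ.surjective x
    simp only [LinearEquiv.trans_apply, LinearEquiv.symm_apply_apply]
    rw [hψ, hψ']
    simp only [LinearEquiv.prodCongr_apply, LinearEquiv.refl_apply, hφ]
  · have h' : ¬ ∃ x, Q' x = 0 ∧ x ∉ rad Q' :=
      fun h' => h (mixed Q' Q hV.symm hr.symm hz.symm h')
    push Not at h h'
    obtain ⟨Z, hZ⟩ := exists_zero_submodule Q h
    obtain ⟨Z', hZ'⟩ := exists_zero_submodule Q' h'
    have e1 : Nat.card {x | Q x = 0} = Nat.card Z :=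
      Nat.card_congr (Equiv.subtypeEquivRight hZ)
    have e2 : Nat.card {x | Q' x = 0} = Nat.card Z' :=
      Nat.card_congr (Equiv.subtypeEquivRight hZ')
    obtain ⟨φ, hφ⟩ := exists_equiv_of_card Z Z' (finrank_eq_of_natCard hV)
      (finrank_eq_of_natCard (by omega))
    refine ⟨φ, fun x => zmod2_eq_of_iff ?_⟩
    rw [hZ, hZ', hφ]

end QF2

/-- **Browder's classification theorem (Theorem 5.1).** Let `V` be a finite-dimensional
vector space over `𝔽₂` and `Q`, `Q'` quadratic forms on `V`.  Then `Q` and `Q'` are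
equivalent (i.e. `Q' = Q ∘ φ` for some linear automorphism `φ` of `V`) if and only if
their bilinear radicals (the kernels of the associated polar bilinear forms
`B(x,y) = Q(x+y) - Q(x) - Q(y)`) have the same dimension and the zero sets
`{x | Q x = 0}` and `{x | Q' x = 0}` have the same cardinality (the latter records the
"democratic" Arf invariant). -/
theorem quadratic_form_classification_F2 (V : Type*) [AddCommGroup V]
    [Module (ZMod 2) V] [FiniteDimensional (ZMod 2) V]
    (Q Q' : QuadraticForm (ZMod 2) V) :
    (∃ φ : V ≃ₗ[ZMod 2] V, ∀ x : V, Q' x = Q (φ x)) ↔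
      (Module.finrank (ZMod 2) ↥(LinearMap.ker Q.polarBilin) =
        Module.finrank (ZMod 2) ↥(LinearMap.ker Q'.polarBilin) ∧
       Nat.card {x : V | Q x = 0} = Nat.card {x : V | Q' x = 0}) := by
  constructor
  · rintro ⟨φ, hφ⟩
    constructor
    · have : LinearMap.ker Q.polarBilin = (LinearMap.ker Q'.polarBilin).map φ.toLinearMap := by
        ext x
        obtain ⟨x, rfl⟩ := φ.surjective x
        rw [QF2.mem_rad, Submodule.mem_map]
        have hp : ∀ y, QuadraticMap.polar Q (φ x) (φ y) = QuadraticMap.polar Q' x y := fun y => by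
          simp [QuadraticMap.polar, hφ]
        have hx : (∀ y, QuadraticMap.polar Q (φ x) y = 0) ↔ x ∈ LinearMap.ker Q'.polarBilin := by
          rw [QF2.mem_rad, ← φ.surjective.forall.symm]
          simp only [hp]
        rw [hx]
        simp
      rw [this]
      exact LinearEquiv.finrank_map_eq φ _
    · exact (Nat.card_congr (φ.toEquiv.subtypeEquiv fun x => by simp [hφ])).symm
  · rintro ⟨hr, hz⟩
    obtain ⟨φ, hφ⟩ := QF2.classify _ V V Q' Q rfl rfl
      (QF2.natCard_eq_of_finrank hr.symm) hz.symm
    exact ⟨φ, fun x => (hφ x).symm⟩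
end

section
/- Let p be an odd prime, n ≥ 1, and let P be the extraspecial group of order p^{2n+1} and exponent p; concretely, P is generated by elements x₁, …, x_{2n}, ζ of order p with ζ central, [x_{2i−1}, x_{2i}] = ζ for 1 ≤ i ≤ n, and all other commutators among the generators trivial, so that Z(P) = [P,P] = Φ(P) = ⟨ζ⟩ ≅ ℤ/p and V = P/Z(P) ≅ (ℤ/p)^{2n}. Then the image of the natural homomorphism ρ : Aut(P) → Aut(V) × Aut(Z(P)) is isomorphic to the general symplectic group GSp(2n, 𝔽_p) = {M ∈ GL_{2n}(𝔽_p) | Mᵀ J M = cJ for some c ∈ 𝔽_p^×}, where J is the standard symplectic (block-diagonal skew-symmetric) matrix. (Application 1.) -/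
open Matrix

lemma sympl_family {K V : Type*} [Field K] [AddCommGroup V] [Module K V] (n : ℕ)
    (hV : Module.finrank K V = 2 * n) (B : V →ₗ[K] V →ₗ[K] K) (hB : ∀ x, B x x = 0)
    (hnd : ∀ x, x ≠ 0 → ∃ y, B x y ≠ 0) (k : ℕ) (hk : k ≤ n) :
    ∃ e f : ℕ → V, ∀ i < k, ∀ j < k, B (e i) (e j) = 0 ∧ B (f i) (f j) = 0 ∧
      B (e i) (f j) = if i = j then 1 else 0 := by
  have hskew : ∀ x y, B x y = - B y x := by
    intro x y
    have h := hB (x + y)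
    simp only [map_add, LinearMap.add_apply, hB] at h
    linear_combination h
  induction k with
  | zero => exact ⟨0, 0, by simp⟩
  | succ k ih =>
    obtain ⟨e, f, h⟩ := ih (by omega)
    let q : V → V := fun w => ∑ i ∈ Finset.range k, (B w (f i) • e i - B w (e i) • f i)
    have qe : ∀ w, ∀ j < k, B (w - q w) (e j) = 0 := by
      intro w j hj
      simp only [q, map_sub, map_sum, LinearMap.sub_apply, LinearMap.sum_apply, map_smul,
        LinearMap.smul_apply]
      rw [Finset.sum_eq_single j]
      · rw [(h j hj j hj).1, hskew (f j) (e j), (h j hj j hj).2.2]; simp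
      · intro i hi hij
        have hi' := Finset.mem_range.1 hi
        rw [(h i hi' j hj).1, hskew (f i) (e j), (h j hj i hi').2.2]; simp [Ne.symm hij]
      · intro hj'; exact absurd (Finset.mem_range.2 hj) hj'
    have qf : ∀ w, ∀ j < k, B (w - q w) (f j) = 0 := by
      intro w j hj
      simp only [q, map_sub, map_sum, LinearMap.sub_apply, LinearMap.sum_apply, map_smul,
        LinearMap.smul_apply]
      rw [Finset.sum_eq_single j]
      · rw [(h j hj j hj).2.1, (h j hj j hj).2.2]; simp
      · intro i hi hij
        have hi' := Finset.mem_range.1 hi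
        rw [(h i hi' j hj).2.1, (h i hi' j hj).2.2]; simp [hij]
      · intro hj'; exact absurd (Finset.mem_range.2 hj) hj'
    classical
    let S : Finset V := (Finset.range k).image e ∪ (Finset.range k).image f
    have hScard : S.card ≤ 2 * k := by
      refine (Finset.card_union_le _ _).trans ?_
      have h1 := Finset.card_image_le (s := Finset.range k) (f := e)
      have h2 := Finset.card_image_le (s := Finset.range k) (f := f)
      simp only [Finset.card_range] at h1 h2
      omega
    have hne : ∃ u, u ∉ Submodule.span K (S : Set V) := by
      by_contra! hc
      have htop : Submodule.span K (S : Set V) = ⊤ := by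
        rw [eq_top_iff]; intro x _; exact hc x
      have h1 := finrank_span_finset_le_card (R := K) S
      unfold Set.finrank at h1
      rw [htop, finrank_top, hV] at h1
      omega
    obtain ⟨u, hu⟩ := hne
    have hq : ∀ w, q w ∈ Submodule.span K (S : Set V) := by
      intro w
      refine Submodule.sum_mem _ fun i hi => Submodule.sub_mem _ ?_ ?_
      · exact Submodule.smul_mem _ _ (Submodule.subset_span (by simp [S]; left; exact ⟨i, by simpa using hi, rfl⟩))
      · exact Submodule.smul_mem _ _ (Submodule.subset_span (by simp [S]; right; exact ⟨i, by simpa using hi, rfl⟩))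
    set v := u - q u with hv
    have hv0 : v ≠ 0 := by
      intro h0
      apply hu
      rw [sub_eq_zero.1 h0]; exact hq u
    obtain ⟨y, hy⟩ := hnd v hv0
    set w := (B v y)⁻¹ • y with hw
    have hvw : B v w = 1 := by simp [hw, hy]
    have hve := qe u
    have hvf := qf u
    rw [← hv] at hve hvf
    have hvw' : B v (w - q w) = 1 := by
      rw [map_sub, hvw]
      simp only [q, map_sum, map_sub, map_smul]
      rw [Finset.sum_eq_zero]
      · simp
      · intro i hi
        rw [hve i (Finset.mem_range.1 hi), hvf i (Finset.mem_range.1 hi)]; simp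
    have hwe := qe w
    have hwf := qf w
    refine ⟨Function.update e k v, Function.update f k (w - q w), ?_⟩
    intro i hi j hj
    have hev : ∀ j < k, B (e j) v = 0 := fun j hj => by rw [hskew, hve j hj, neg_zero]
    have hew : ∀ j < k, B (e j) (w - q w) = 0 := fun j hj => by rw [hskew, hwe j hj, neg_zero]
    have hfw : ∀ j < k, B (f j) (w - q w) = 0 := fun j hj => by rw [hskew, hwf j hj, neg_zero]
    generalize w - q w = w' at *
    rcases Nat.lt_succ_iff_lt_or_eq.1 hi with hi | rfl <;>
    rcases Nat.lt_succ_iff_lt_or_eq.1 hj with hj | rfl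
    · rw [Function.update_of_ne hi.ne, Function.update_of_ne hj.ne, Function.update_of_ne hi.ne,
        Function.update_of_ne hj.ne]
      exact h i hi j hj
    · rw [Function.update_of_ne hi.ne, Function.update_of_ne hi.ne]
      simp [hev i hi, hew i hi, hfw i hi, hi.ne]
    · rw [Function.update_of_ne hj.ne, Function.update_of_ne hj.ne]
      simp [hve j hj, hwf j hj, hvf j hj, hj.ne']
    · simp [hB, hvw']

lemma sympl_basis {K V : Type*} [Field K] [AddCommGroup V] [Module K V] (n : ℕ) (hn : 1 ≤ n)
    (hV : Module.finrank K V = 2 * n) (B : V →ₗ[K] V →ₗ[K] K) (hB : ∀ x, B x x = 0)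
    (hnd : ∀ x, x ≠ 0 → ∃ y, B x y ≠ 0)
    (J : Matrix (Fin (2 * n)) (Fin (2 * n)) K)
    (hJ : ∀ i j : Fin (2 * n), J i j =
      if (j : ℕ) = (i : ℕ) + 1 ∧ (i : ℕ) % 2 = 0 then 1
      else if (i : ℕ) = (j : ℕ) + 1 ∧ (j : ℕ) % 2 = 0 then -1 else 0) :
    ∃ b : Module.Basis (Fin (2 * n)) K V, ∀ i j, B (b i) (b j) = J i j := by
  have hskew : ∀ x y, B x y = - B y x := by
    intro x y
    have h := hB (x + y)
    simp only [map_add, LinearMap.add_apply, hB] at h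
    linear_combination h
  obtain ⟨e, f, h⟩ := sympl_family n hV B hB hnd n le_rfl
  let b : Fin (2 * n) → V := fun i => if (i : ℕ) % 2 = 0 then e (i / 2) else f (i / 2)
  have hb : ∀ i j, B (b i) (b j) = J i j := by
    intro i j
    have h1 := h (i / 2) (by omega) (j / 2) (by omega)
    have h2 := h (j / 2) (by omega) (i / 2) (by omega)
    rw [hJ]
    simp only [b]
    by_cases hi : (i : ℕ) % 2 = 0 <;> by_cases hj : (j : ℕ) % 2 = 0
    · rw [if_pos hi, if_pos hj, h1.1, if_neg (by omega), if_neg (by omega)]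
    · rw [if_pos hi, if_neg hj, h1.2.2, if_neg (by omega : ¬ ((i : ℕ) = j + 1 ∧ (j : ℕ) % 2 = 0))]
      apply if_congr _ rfl rfl
      omega
    · rw [if_neg hi, if_pos hj, hskew, h2.2.2, if_neg (by omega : ¬ ((j : ℕ) = i + 1 ∧ (i : ℕ) % 2 = 0))]
      by_cases hc : (j : ℕ) / 2 = i / 2
      · rw [if_pos hc, if_pos (by omega)]
      · rw [if_neg hc, if_neg (by omega), neg_zero]
    · rw [if_neg hi, if_neg hj, h1.2.1, if_neg (by omega), if_neg (by omega)]
  have hli : LinearIndependent K b := by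
    rw [Fintype.linearIndependent_iff]
    intro g hg i
    let t : Fin (2 * n) := if hi : (i : ℕ) % 2 = 0 then ⟨i + 1, by omega⟩ else ⟨i - 1, by omega⟩
    have ht : (t : ℕ) = if (i : ℕ) % 2 = 0 then (i : ℕ) + 1 else (i : ℕ) - 1 := by
      simp only [t]; split_ifs <;> rfl
    have h0 : B (∑ i, g i • b i) (b t) = 0 := by rw [hg]; simp
    simp only [map_sum, LinearMap.sum_apply, map_smul, LinearMap.smul_apply, hb, smul_eq_mul] at h0
    rw [Finset.sum_eq_single i] at h0
    · rw [hJ] at h0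
      split_ifs at h0 with h1 h2
      · simpa using h0
      · simpa using h0
      · exfalso
        split_ifs at ht <;> omega
    · intro j _ hj
      have hj' : (j : ℕ) ≠ i := fun hh => hj (Fin.ext hh)
      rw [hJ, if_neg, if_neg, mul_zero]
      · split_ifs at ht <;> omega
      · split_ifs at ht <;> omega
    · simp
  have : Nonempty (Fin (2 * n)) := ⟨⟨0, by omega⟩⟩
  refine ⟨basisOfLinearIndependentOfCardEqFinrank hli (by simp [hV]), ?_⟩
  simpa using hb

lemma baer_section (p : ℕ) [Fact p.Prime] (hodd : Odd p) {P V : Type*} [Group P]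
    [AddCommGroup V] [Module (ZMod p) V] (hexp : ∀ g : P, g ^ p = 1)
    (π : P → V) (hπ : ∀ x y, π (x * y) = π x + π y) (hsurj : Function.Surjective π)
    (E : ZMod p → P) (hE : ∀ a b, E (a + b) = E a * E b) (hEc : ∀ a x, E a * x = x * E a)
    (hπE : ∀ a, π (E a) = 0)
    (β : V →ₗ[ZMod p] V →ₗ[ZMod p] ZMod p) (hβ : ∀ x, β x x = 0)
    (hcomm : ∀ x y, x * y = y * x * E (β (π x) (π y))) :
    ∃ s : V → P, (∀ v, π (s v) = v) ∧
      ∀ v w, s v * s w = s (v + w) * E (2⁻¹ * β v w) := by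
  have h2 : (2 : ZMod p) ≠ 0 := by
    have : p ≠ 2 := by rintro rfl; exact absurd hodd (by decide)
    have h3 := (Fact.out : p.Prime).two_le
    intro h0
    have : ((2 : ℕ) : ZMod p) = 0 := by exact_mod_cast h0
    rw [ZMod.natCast_eq_zero_iff] at this
    have := Nat.le_of_dvd (by norm_num) this
    omega
  have hskew : ∀ x y, β x y = - β y x := by
    intro x y
    have h := hβ (x + y)
    simp only [map_add, LinearMap.add_apply, hβ] at h
    linear_combination h
  have hE0 : E 0 = 1 := by simpa using hE 0 0
  have hπ1 : π 1 = 0 := by simpa using hπ 1 1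
  have hπi : ∀ x, π x⁻¹ = - π x := fun x => by
    have := hπ x⁻¹ x
    rw [inv_mul_cancel, hπ1] at this
    exact eq_neg_of_add_eq_zero_left this.symm
  let ad : P → P → P := fun x y => x * y * E (-(2⁻¹ * β (π x) (π y)))
  have hπad : ∀ x y, π (ad x y) = π x + π y := fun x y => by simp [ad, hπ, hπE]
  let iA : AddCommGroup P :=
    { add := ad
      zero := 1
      neg := fun x => x⁻¹
      nsmul := @nsmulRec P ⟨(1 : P)⟩ ⟨ad⟩
      zsmul := @zsmulRec P ⟨(1 : P)⟩ ⟨ad⟩ ⟨fun x => x⁻¹⟩ (@nsmulRec P ⟨(1 : P)⟩ ⟨ad⟩)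
      add_assoc := by
        intro x y z
        change ad (ad x y) z = ad x (ad y z)
        have e1 : ad (ad x y) z = x * y * E (-(2⁻¹ * β (π x) (π y))) * z *
          E (-(2⁻¹ * β (π x + π y) (π z))) := by rw [← hπad]
        have e2 : ad x (ad y z) = x * (y * z * E (-(2⁻¹ * β (π y) (π z)))) *
          E (-(2⁻¹ * β (π x) (π y + π z))) := by rw [← hπad]
        rw [e1, e2, mul_assoc (x * y), hEc]
        simp only [mul_assoc, ← hE]
        congr 4
        simp only [map_add, LinearMap.add_apply]; ring
      zero_add := by
        intro x
        change ad 1 x = x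
        simp [ad, hπ1, hE0]
      add_zero := by
        intro x
        change ad x 1 = x
        simp [ad, hπ1, hE0]
      neg_add_cancel := by
        intro x
        change ad x⁻¹ x = 1
        simp [ad, hπi, hβ, hE0]
      add_comm := by
        intro x y
        change ad x y = ad y x
        simp only [ad]
        rw [hcomm x y, mul_assoc, ← hE, hskew (π y) (π x)]
        congr 2
        field_simp
        ring }
  have hnsmul : ∀ (n : ℕ) (x : P), n • x = x ^ n := by
    intro n x
    have hpn : ∀ n : ℕ, π (x ^ n) = n • π x := by
      intro n
      induction n with
      | zero => simp [hπ1]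
      | succ n ih => rw [pow_succ, hπ, ih, succ_nsmul]
    induction n with
    | zero => rw [zero_nsmul, pow_zero]; rfl
    | succ n ih =>
      rw [succ_nsmul, ih]
      change ad (x ^ n) x = x ^ (n + 1)
      simp [ad, hpn, hβ, hE0, pow_succ]
  let iM : Module (ZMod p) P := AddCommGroup.zmodModule (n := p)
    (fun x => (hnsmul p x).trans (hexp x))
  let πh : P →+ V := { toFun := π, map_zero' := hπ1, map_add' := hπad }
  let πl : P →ₗ[ZMod p] V := πh.toZModLinearMap p
  obtain ⟨s, hs⟩ := πl.exists_rightInverse_of_surjective (LinearMap.range_eq_top.2 hsurj)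
  have hs' : ∀ v, π (s v) = v := fun v => LinearMap.congr_fun hs v
  refine ⟨s, hs', fun v w => ?_⟩
  have : s (v + w) = ad (s v) (s w) := s.map_add v w
  rw [this]
  simp only [ad, hs']
  rw [mul_assoc, ← hE, neg_add_cancel, hE0, mul_one]

lemma lift_aut (p : ℕ) [Fact p.Prime] (hodd : Odd p) {P V : Type*} [Group P]
    [AddCommGroup V] [Module (ZMod p) V] (hexp : ∀ g : P, g ^ p = 1)
    (π : P → V) (hπ : ∀ x y, π (x * y) = π x + π y) (hsurj : Function.Surjective π)
    (E : ZMod p → P) (hE : ∀ a b, E (a + b) = E a * E b) (hEc : ∀ a x, E a * x = x * E a)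
    (hEinj : Function.Injective E)
    (hπE : ∀ x, π x = 0 ↔ ∃ a, E a = x)
    (β : V →ₗ[ZMod p] V →ₗ[ZMod p] ZMod p) (hβ : ∀ x, β x x = 0)
    (hcomm : ∀ x y, x * y = y * x * E (β (π x) (π y)))
    (f : V → V) (hfi : Function.Bijective f) (hf : ∀ v w, f (v + w) = f v + f w)
    (c : ZMod p) (hc : c ≠ 0) (hfc : ∀ v w, β (f v) (f w) = c * β v w) :
    ∃ φ : MulAut P, ∀ x, π (φ x) = f (π x) := by
  have hπE' : ∀ a, π (E a) = 0 := fun a => (hπE _).2 ⟨a, rfl⟩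
  obtain ⟨s, hs, hss⟩ := baer_section p hodd hexp π hπ hsurj E hE hEc hπE' β hβ hcomm
  have hE0 : E 0 = 1 := by simpa using hE 0 0
  have hπ1 : π 1 = 0 := by simpa using hπ 1 1
  have hπi : ∀ x, π x⁻¹ = - π x := fun x => by
    have := hπ x⁻¹ x
    rw [inv_mul_cancel, hπ1] at this
    exact eq_neg_of_add_eq_zero_left this.symm
  have hex : ∀ x, ∃ a, E a = (s (π x))⁻¹ * x := fun x => by
    rw [← hπE, hπ, hπi, hs]; simp
  choose t ht using hex
  have hdec : ∀ x, x = s (π x) * E (t x) := fun x => by rw [ht]; group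
  have huniq : ∀ v a, t (s v * E a) = a := by
    intro v a
    apply hEinj
    rw [ht, hπ, hs, hπE', add_zero]; group
  have hpr : ∀ v a w b, s v * E a * (s w * E b) = s (v + w) * E (2⁻¹ * β v w + (a + b)) := by
    intro v a w b
    rw [mul_assoc, ← mul_assoc (E a), hEc a, mul_assoc (s w), ← hE, ← mul_assoc, hss, mul_assoc,
      ← hE]
  have hπs : ∀ v a, π (s v * E a) = v := fun v a => by rw [hπ, hs, hπE', add_zero]
  let F : P →* P := MonoidHom.mk' (fun x => s (f (π x)) * E (c * t x)) (by
    intro x y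
    have h1 : t (x * y) = 2⁻¹ * β (π x) (π y) + (t x + t y) := by
      conv_lhs => rw [hdec x, hdec y, hpr, huniq]
    rw [hpr, hπ, hf, h1, hfc]
    congr 2
    ring)
  have hF : ∀ x, F x = s (f (π x)) * E (c * t x) := fun x => rfl
  have hbij : Function.Bijective F := by
    constructor
    · intro x y hxy
      rw [hF, hF] at hxy
      have h1 := congrArg π hxy
      have h2 := congrArg t hxy
      rw [hπs, hπs] at h1
      rw [huniq, huniq] at h2
      rw [hdec x, hdec y, hfi.1 h1, mul_left_cancel₀ hc h2]
    · intro y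
      obtain ⟨v, hv⟩ := hfi.2 (π y)
      refine ⟨s v * E (c⁻¹ * t y), ?_⟩
      rw [hF, hπs, huniq, hv, mul_inv_cancel_left₀ hc, ← hdec]
  refine ⟨MulEquiv.ofBijective F hbij, fun x => ?_⟩
  change π (F x) = _
  rw [hF, hπs]

lemma commutator_form (p : ℕ) [Fact p.Prime] {P V : Type*} [Group P]
    [AddCommGroup V] [Module (ZMod p) V]
    (π : P → V) (hπ : ∀ x y, π (x * y) = π x + π y) (hsurj : Function.Surjective π)
    (E : ZMod p → P) (hE : ∀ a b, E (a + b) = E a * E b) (hEc : ∀ a x, E a * x = x * E a)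
    (hEinj : Function.Injective E)
    (hπE : ∀ x, π x = 0 ↔ ∃ a, E a = x)
    (hex : ∀ x y, ∃ a, x * y = y * x * E a) :
    ∃ β : V →ₗ[ZMod p] V →ₗ[ZMod p] ZMod p, (∀ x, β x x = 0) ∧
      ∀ x y, x * y = y * x * E (β (π x) (π y)) := by
  have hE0 : E 0 = 1 := by simpa using hE 0 0
  have hπ1 : π 1 = 0 := by simpa using hπ 1 1
  have hπi : ∀ x, π x⁻¹ = - π x := fun x => by
    have := hπ x⁻¹ x
    rw [inv_mul_cancel, hπ1] at this
    exact eq_neg_of_add_eq_zero_left this.symm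
  choose γ hγ using hex
  have huniq : ∀ x y a, x * y = y * x * E a → γ x y = a := by
    intro x y a h
    apply hEinj
    rw [hγ x y] at h
    exact mul_left_cancel h
  have hl : ∀ x x' y, γ (x * x') y = γ x y + γ x' y := by
    intro x x' y
    apply huniq
    calc x * x' * y = x * (x' * y) := mul_assoc _ _ _
      _ = x * y * x' * E (γ x' y) := by rw [hγ x' y]; simp only [mul_assoc]
      _ = y * (x * x') * E (γ x y + γ x' y) := by
        rw [hγ x y, hE, mul_assoc (y * x), hEc]; simp only [mul_assoc]
  have hr : ∀ x y y', γ x (y * y') = γ x y + γ x y' := by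
    intro x y y'
    apply huniq
    calc x * (y * y') = x * y * y' := (mul_assoc _ _ _).symm
      _ = y * (x * y') * E (γ x y) := by
        rw [hγ x y, mul_assoc (y * x), hEc]; simp only [mul_assoc]
      _ = y * y' * x * E (γ x y + γ x y') := by
        rw [hγ x y', add_comm, hE]; simp only [mul_assoc]
  have hlE : ∀ a y, γ (E a) y = 0 := fun a y => huniq _ _ _ (by rw [hE0, mul_one, hEc])
  have hrE : ∀ x a, γ x (E a) = 0 := fun a y => huniq _ _ _ (by rw [hE0, mul_one, hEc])
  have hdec : ∀ x x', π x = π x' → ∃ a, x = x' * E a := by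
    intro x x' h
    obtain ⟨a, ha⟩ := (hπE (x'⁻¹ * x)).1 (by rw [hπ, hπi, h]; simp)
    exact ⟨a, by rw [ha]; group⟩
  have hwd : ∀ x x' y y', π x = π x' → π y = π y' → γ x y = γ x' y' := by
    intro x x' y y' h h'
    obtain ⟨a, rfl⟩ := hdec _ _ h
    obtain ⟨b, rfl⟩ := hdec _ _ h'
    rw [hl, hr, hlE, hrE]; simp
  let σ := Function.surjInv hsurj
  have hσ : ∀ v, π (σ v) = v := Function.surjInv_eq hsurj
  let β : V →ₗ[ZMod p] V →ₗ[ZMod p] ZMod p :=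
    (AddMonoidHom.mk' (fun v => (AddMonoidHom.mk' (fun w => γ (σ v) (σ w)) (by
      intro w w'
      rw [← hr]
      exact hwd _ _ _ _ rfl (by rw [hπ]; simp only [hσ]))).toZModLinearMap p) (by
      intro v v'
      ext w
      change γ (σ (v + v')) (σ w) = γ (σ v) (σ w) + γ (σ v') (σ w)
      rw [← hl]
      exact hwd _ _ _ _ (by rw [hπ]; simp only [hσ]) rfl)).toZModLinearMap p
  have hβ : ∀ v w, β v w = γ (σ v) (σ w) := fun v w => rfl
  refine ⟨β, fun v => ?_, fun x y => ?_⟩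
  · rw [hβ]; exact huniq _ _ _ (by rw [hE0, mul_one])
  · rw [hβ, hwd (σ (π x)) x (σ (π y)) y (hσ _) (hσ _)]; exact hγ x y

lemma exists_quot_module.{u} (p : ℕ) {Q : Type u} [Group Q] (hc : ∀ x y : Q, x * y = y * x)
    (hexp : ∀ x : Q, x ^ p = 1) :
    ∃ (V : Type u) (_ : AddCommGroup V) (_ : Module (ZMod p) V),
      Nonempty (Q ≃* Multiplicative V) := by
  let iC : CommGroup Q := { (inferInstance : Group Q) with mul_comm := hc }
  exact ⟨Additive Q, inferInstance, AddCommGroup.zmodModule (n := p) (fun x => hexp x.toMul),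
    ⟨MulEquiv.refl Q⟩⟩

/-- Matrix of an automorphism of a group identified with a `ZMod p`-vector space. -/
noncomputable def autMatrix (p : ℕ) {Q V : Type*} [Group Q] [AddCommGroup V] [Module (ZMod p) V]
    (q : Q ≃* Multiplicative V) {ι : Type*} [Fintype ι] [DecidableEq ι]
    (b : Module.Basis ι (ZMod p) V) : MulAut Q →* Matrix ι ι (ZMod p) where
  toFun g := LinearMap.toMatrixAlgEquiv b ((AddMonoidHom.mk'
    (fun v : V => (q (g (q.symm (Multiplicative.ofAdd v)))).toAdd) (by
      intro v w; simp [ofAdd_add])).toZModLinearMap p)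
  map_one' := by
    rw [← map_one (LinearMap.toMatrixAlgEquiv b)]
    congr 1
    ext v
    simp
  map_mul' g h := by
    rw [← map_mul (LinearMap.toMatrixAlgEquiv b)]
    congr 1
    ext v
    simp

lemma gsp_cond (p : ℕ) [Fact p.Prime] {V : Type*} [AddCommGroup V] [Module (ZMod p) V]
    {ι : Type*} [Fintype ι] [DecidableEq ι] (b : Module.Basis ι (ZMod p) V)
    (β : V →ₗ[ZMod p] V →ₗ[ZMod p] ZMod p) (J : Matrix ι ι (ZMod p))
    (hJ : ∀ i j, β (b i) (b j) = J i j) (f : V →ₗ[ZMod p] V) (c : ZMod p) :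
    (LinearMap.toMatrixAlgEquiv b f)ᵀ * J * (LinearMap.toMatrixAlgEquiv b f) = c • J ↔
      ∀ v w, β (f v) (f w) = c * β v w := by
  have hJ' : J = LinearMap.toMatrix₂ b b β := by
    ext i j; rw [LinearMap.toMatrix₂_apply, hJ]
  have hM : LinearMap.toMatrixAlgEquiv b f = LinearMap.toMatrix b b f := rfl
  rw [hJ', hM, ← LinearMap.toMatrix₂_compl₁₂, ← map_smul, (LinearMap.toMatrix₂ b b).injective.eq_iff]
  constructor
  · intro h v w
    exact LinearMap.congr_fun (LinearMap.congr_fun h v) w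
  · intro h
    ext v w
    exact h v w

/-- **Application 1.** Let `p` be an odd prime, `n ≥ 1`, and `P` the extraspecial group
of order `p^{2n+1}` and exponent `p`: a finite group of order `p^{2n+1}`, of exponent
`p`, whose center has order `p` and coincides with the commutator subgroup.  Let
`ρ : Aut(P) → Aut(V) × Aut(Z(P))` be the natural homomorphism, where `V = P/Z(P)`.
Then the image of `ρ` is isomorphic to the general symplectic group
`GSp(2n, 𝔽_p) = {M ∈ GL_{2n}(𝔽_p) | Mᵀ J M = cJ for some c ∈ 𝔽_p^×}`, where `J` is
the standard block-diagonal skew-symmetric matrix. -/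
theorem extraspecial_aut_image_iso_GSp (p : ℕ) [Fact p.Prime] (hodd : Odd p)
    (n : ℕ) (hn : 1 ≤ n)
    (P : Type*) [Group P] [Finite P]
    (hcard : Nat.card P = p ^ (2 * n + 1))
    (hexp : ∀ g : P, g ^ p = 1)
    (hZcard : Nat.card ↥(Subgroup.center P) = p)
    (hZcomm : Subgroup.center P = commutator P)
    (ρ : MulAut P →* MulAut (P ⧸ Subgroup.center P) × MulAut ↥(Subgroup.center P))
    (hρ : ∀ φ : MulAut P,
      (∀ g : P, (ρ φ).1 ((g : P ⧸ Subgroup.center P)) = ((φ g : P) : P ⧸ Subgroup.center P)) ∧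
      (∀ z : ↥(Subgroup.center P), (((ρ φ).2 z : ↥(Subgroup.center P)) : P) = φ (z : P)))
    (J : Matrix (Fin (2 * n)) (Fin (2 * n)) (ZMod p))
    (hJ : ∀ i j : Fin (2 * n), J i j =
      if (j : ℕ) = (i : ℕ) + 1 ∧ (i : ℕ) % 2 = 0 then 1
      else if (i : ℕ) = (j : ℕ) + 1 ∧ (j : ℕ) % 2 = 0 then -1 else 0)
    (GSp : Subgroup (GL (Fin (2 * n)) (ZMod p)))
    (hGSp : ∀ M : GL (Fin (2 * n)) (ZMod p), M ∈ GSp ↔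
      ∃ c : (ZMod p)ˣ,
        (M : Matrix (Fin (2 * n)) (Fin (2 * n)) (ZMod p))ᵀ * J *
          (M : Matrix (Fin (2 * n)) (Fin (2 * n)) (ZMod p)) = (c : ZMod p) • J) :
    Nonempty (↥ρ.range ≃* ↥GSp) := by
  have hp := (Fact.out : p.Prime)
  have hcc : ∀ x y : P, x * y * x⁻¹ * y⁻¹ ∈ Subgroup.center P := by
    intro x y
    rw [hZcomm]
    exact Subgroup.commutator_mem_commutator (Subgroup.mem_top x) (Subgroup.mem_top y)
  have hQc : ∀ x y : P ⧸ Subgroup.center P, x * y = y * x := by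
    intro x y
    induction x using QuotientGroup.induction_on with | _ x
    induction y using QuotientGroup.induction_on with | _ y
    rw [← QuotientGroup.mk_mul, ← QuotientGroup.mk_mul, QuotientGroup.eq]
    have := hcc y⁻¹ x⁻¹
    convert this using 1
    group
  have hQe : ∀ x : P ⧸ Subgroup.center P, x ^ p = 1 := by
    intro x
    induction x using QuotientGroup.induction_on with | _ x
    rw [← QuotientGroup.mk_pow, hexp]; rfl
  obtain ⟨V, iV, iM, ⟨q⟩⟩ := exists_quot_module p hQc hQe
  obtain ⟨e⟩ : Nonempty (Multiplicative (ZMod p) ≃* Subgroup.center P) := by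
    have h := zmodCyclicMulEquiv (isCyclic_of_prime_card hZcard)
    rw [hZcard] at h
    exact ⟨h⟩
  let π : P → V := fun x => (q (x : P ⧸ Subgroup.center P)).toAdd
  have hπ : ∀ x y, π (x * y) = π x + π y := fun x y => by simp [π]
  have hsurj : Function.Surjective π := by
    intro v
    obtain ⟨x, hx⟩ := QuotientGroup.mk_surjective (q.symm (Multiplicative.ofAdd v))
    exact ⟨x, by simp [π, hx]⟩
  let E : ZMod p → P := fun a => (e (Multiplicative.ofAdd a) : P)
  have hE : ∀ a b, E (a + b) = E a * E b := fun a b => by simp [E, ofAdd_add]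
  have hEc : ∀ a x, E a * x = x * E a := fun a x =>
    (Subgroup.mem_center_iff.1 (e (Multiplicative.ofAdd a)).2 x).symm
  have hEinj : Function.Injective E := fun a b h => by
    simpa [E] using h
  have hEs : ∀ z ∈ Subgroup.center P, ∃ a, E a = z := fun z hz =>
    ⟨(e.symm ⟨z, hz⟩).toAdd, by simp [E]⟩
  have hEm : ∀ a, E a ∈ Subgroup.center P := fun a => (e (Multiplicative.ofAdd a)).2
  have hπE : ∀ x, π x = 0 ↔ ∃ a, E a = x := by
    intro x
    have : π x = 0 ↔ x ∈ Subgroup.center P := by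
      simp only [π]
      rw [toAdd_eq_zero, map_eq_one_iff q q.injective, QuotientGroup.eq_one_iff]
    rw [this]
    exact ⟨hEs x, by rintro ⟨a, rfl⟩; exact hEm a⟩
  have hexc : ∀ x y : P, ∃ a, x * y = y * x * E a := by
    intro x y
    obtain ⟨a, ha⟩ := hEs _ (hcc x y)
    exact ⟨a, by rw [← hEc, ha]; group⟩
  obtain ⟨β, hβ, hcomm⟩ := commutator_form p π hπ hsurj E hE hEc hEinj hπE hexc
  have hE0 : E 0 = 1 := by simpa using hE 0 0
  have hnd : ∀ v, v ≠ 0 → ∃ w, β v w ≠ 0 := by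
    intro v hv
    by_contra! h
    obtain ⟨x, rfl⟩ := hsurj v
    apply hv
    rw [hπE]
    apply hEs
    rw [Subgroup.mem_center_iff]
    intro y
    rw [hcomm x y, h, hE0, mul_one]
  have hfinV : Finite V := Finite.of_surjective π hsurj
  have hcardV : Nat.card V = p ^ (2 * n) := by
    have h1 := Subgroup.card_eq_card_quotient_mul_card_subgroup (Subgroup.center P)
    have h2 : Nat.card (P ⧸ Subgroup.center P) = Nat.card V :=
      Nat.card_congr (q.toEquiv.trans Multiplicative.toAdd)
    rw [hcard, hZcard, h2, pow_succ] at h1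
    exact (Nat.eq_of_mul_eq_mul_right hp.pos h1).symm
  have hrank : Module.finrank (ZMod p) V = 2 * n := by
    have h := Module.natCard_eq_pow_finrank (K := ZMod p) (V := V)
    rw [hcardV, Nat.card_zmod] at h
    exact (Nat.pow_right_injective hp.two_le h).symm
  obtain ⟨b, hb⟩ := sympl_basis n hn hrank β hβ hnd J hJ
  -- multiplier of an automorphism
  have hmult : ∀ φ : MulAut P, ∃ c : ZMod p, c ≠ 0 ∧ (∀ a, φ (E a) = E (c * a)) ∧
      ∀ x y, β (π (φ x)) (π (φ y)) = c * β (π x) (π y) := by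
    intro φ
    have hφE : ∀ a, ∃ a', E a' = φ (E a) := by
      intro a
      apply hEs
      rw [← hρ φ |>.2 ⟨E a, hEm a⟩]
      exact ((ρ φ).2 ⟨E a, hEm a⟩).2
    choose m hm using hφE
    let M : ZMod p →+ ZMod p := AddMonoidHom.mk' m (by
      intro a a'
      apply hEinj
      rw [hm, hE, hE, map_mul, hm, hm])
    let L := M.toZModLinearMap p
    have hL : ∀ a, m a = m 1 * a := by
      intro a
      have : L (a • 1) = a • L 1 := L.map_smul a 1
      rw [smul_eq_mul, mul_one, smul_eq_mul, mul_comm] at this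
      exact this
    refine ⟨m 1, ?_, ?_, ?_⟩
    · intro h0
      have h1 : φ (E 1) = φ 1 := by rw [← hm, h0, hE0, map_one]
      have h2 := φ.injective h1
      rw [← hE0] at h2
      exact one_ne_zero (hEinj h2)
    · intro a; rw [← hL, hm]
    · intro x y
      rw [← hL]
      apply hEinj
      rw [hm]
      have h1 := congrArg φ (hcomm x y)
      rw [map_mul, map_mul, map_mul, hcomm (φ x) (φ y)] at h1
      exact mul_left_cancel h1
  have hπρ : ∀ (φ : MulAut P) (x : P),
      (q ((ρ φ).1 (q.symm (Multiplicative.ofAdd (π x))))).toAdd = π (φ x) := by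
    intro φ x
    simp only [π, ofAdd_toAdd, MulEquiv.symm_apply_apply]
    rw [(hρ φ).1]
  -- the trivial-on-V automorphisms are trivial on Z
  have hker : ∀ φ : MulAut P, (ρ φ).1 = 1 → ρ φ = 1 := by
    intro φ h
    refine Prod.ext h ?_
    obtain ⟨c, hc0, hcE, hcβ⟩ := hmult φ
    have hfix : ∀ x, π (φ x) = π x := fun x => by rw [← hπρ, h]; simp
    have hc1 : c = 1 := by
      have hv : b ⟨0, by omega⟩ ≠ 0 := b.ne_zero _
      obtain ⟨w, hw⟩ := hnd _ hv
      obtain ⟨x, hx⟩ := hsurj (b ⟨0, by omega⟩)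
      obtain ⟨y, hy⟩ := hsurj w
      have h1 := hcβ x y
      rw [hfix, hfix, hx, hy] at h1
      exact mul_right_cancel₀ hw (by rw [one_mul]; exact h1.symm)
    ext z
    obtain ⟨a, ha⟩ := hEs z z.2
    rw [(hρ φ).2, ← ha, hcE, hc1, one_mul]
    simpa using ha
  let Ψ : MulAut P →* GL (Fin (2 * n)) (ZMod p) :=
    (autMatrix p q b).toHomUnits.comp ((MonoidHom.fst _ _).comp ρ)
  let F : MulAut P → (V →ₗ[ZMod p] V) := fun φ => (AddMonoidHom.mk'
    (fun v : V => (q ((ρ φ).1 (q.symm (Multiplicative.ofAdd v)))).toAdd) (by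
      intro v w; simp [ofAdd_add])).toZModLinearMap p
  have hΨ : ∀ φ, (Ψ φ : Matrix (Fin (2 * n)) (Fin (2 * n)) (ZMod p)) =
      LinearMap.toMatrixAlgEquiv b (F φ) := fun φ => rfl
  have hF : ∀ φ x, F φ (π x) = π (φ x) := hπρ
  have hkereq : ρ.ker = Ψ.ker := by
    ext φ
    rw [MonoidHom.mem_ker, MonoidHom.mem_ker]
    constructor
    · intro h
      simp [Ψ, h]
    · intro h
      apply hker
      have h1 : LinearMap.toMatrixAlgEquiv b (F φ) = 1 := by rw [← hΨ, h]; rfl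
      have h2 : F φ = 1 := (LinearMap.toMatrixAlgEquiv b).injective (by rw [h1, map_one])
      ext x
      induction x using QuotientGroup.induction_on with | _ x
      have h3 : π (φ x) = π x := by rw [← hF, h2]; rfl
      rw [(hρ φ).1]
      exact q.injective (Multiplicative.toAdd.injective h3)
  have hrange : Ψ.range = GSp := by
    ext M
    rw [hGSp, MonoidHom.mem_range]
    constructor
    · rintro ⟨φ, rfl⟩
      obtain ⟨c, hc0, hcE, hcβ⟩ := hmult φ
      refine ⟨Units.mk0 c hc0, ?_⟩
      rw [hΨ, gsp_cond p b β J hb]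
      intro v w
      obtain ⟨x, rfl⟩ := hsurj v
      obtain ⟨y, rfl⟩ := hsurj w
      rw [hF, hF]
      exact hcβ x y
    · rintro ⟨c, hc⟩
      let f : V →ₗ[ZMod p] V := (LinearMap.toMatrixAlgEquiv b).symm M
      let f' : V →ₗ[ZMod p] V := (LinearMap.toMatrixAlgEquiv b).symm (M⁻¹ : GL _ _)
      have hMf : (M : Matrix (Fin (2 * n)) (Fin (2 * n)) (ZMod p)) =
        LinearMap.toMatrixAlgEquiv b f := by simp [f]
      have hff' : f * f' = 1 := by
        simp only [f, f']
        rw [← map_mul, ← Units.val_mul, mul_inv_cancel, Units.val_one, map_one]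
      have hf'f : f' * f = 1 := by
        simp only [f, f']
        rw [← map_mul, ← Units.val_mul, inv_mul_cancel, Units.val_one, map_one]
      rw [hMf, gsp_cond p b β J hb] at hc
      have hbij : Function.Bijective f := Function.bijective_iff_has_inverse.2
        ⟨f', fun v => LinearMap.congr_fun hf'f v, fun v => LinearMap.congr_fun hff' v⟩
      obtain ⟨φ, hφ⟩ := lift_aut p hodd hexp π hπ hsurj E hE hEc hEinj hπE β hβ hcomm f hbij
        (fun v w => map_add f v w) c c.ne_zero hc
      refine ⟨φ, Units.ext ?_⟩
      rw [hΨ, hMf]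
      congr 1
      ext v
      obtain ⟨x, rfl⟩ := hsurj v
      rw [hF, hφ]
  exact ⟨(QuotientGroup.quotientKerEquivRange ρ).symm.trans
    ((QuotientGroup.quotientMulEquivOfEq hkereq).trans
      ((QuotientGroup.quotientKerEquivRange Ψ).trans (MulEquiv.subgroupCongr hrange)))⟩
end
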